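/- arXiv:2308.16146 — 3 statements merged into one kernel-verified Lean document; each statement's English description precedes it below -/
import Mathlib

section
/- For n ∈ {1, 2}, the supremum over Q ∈ O(n) of the GEPP growth factor ρ^{GEPP}(Q) equals 2^{n−1}. For every n ≥ 3 and every Q ∈ O(n), ρ^{GEPP}(Q) < 2^{n−1} (strict inequality). -/
open Matrix Filter

/-- Gaussian-elimination intermediate entry `A^{(k+1)}_{ij}` (0-indexed step `k`):
the Schur complement of the leading `k × k` block. -/
noncomputable def geEntry {n : ℕ} (A : Matrix (Fin n) (Fin n) ℝ) (k i j : Fin n) : ℝ :=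
  A i j - ∑ a : Fin k.val, ∑ b : Fin k.val,
    A i (Fin.castLE k.isLt.le a) *
      (A.submatrix (Fin.castLE k.isLt.le) (Fin.castLE k.isLt.le))⁻¹ a b *
      A (Fin.castLE k.isLt.le b) j

/-- `A` is PP: at each GE step the pivot dominates its column. -/
def IsPP {n : ℕ} (A : Matrix (Fin n) (Fin n) ℝ) : Prop :=
  ∀ k i : Fin n, k ≤ i → |geEntry A k i k| ≤ |geEntry A k k k|

/-- `A` is CP: at each GE step the pivot dominates the whole untriangularized block. -/
def IsCP {n : ℕ} (A : Matrix (Fin n) (Fin n) ℝ) : Prop :=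
  ∀ k i j : Fin n, k ≤ i → k ≤ j → |geEntry A k i j| ≤ |geEntry A k k k|

/-- Maximal absolute Gaussian-elimination intermediate entry of `A`. -/
noncomputable def maxGE {n : ℕ} (A : Matrix (Fin n) (Fin n) ℝ) : ℝ :=
  ⨆ k : Fin n, ⨆ i : {i : Fin n // k ≤ i}, ⨆ j : {j : Fin n // k ≤ j},
    |geEntry A k i.1 j.1|

/-- `max_{i,j} |A_{ij}|`. -/
noncomputable def maxAbs {n : ℕ} (A : Matrix (Fin n) (Fin n) ℝ) : ℝ :=
  ⨆ i, ⨆ j, |A i j|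

/-- Growth factor `ρ(A)`. -/
noncomputable def growth {n : ℕ} (A : Matrix (Fin n) (Fin n) ℝ) : ℝ :=
  maxGE A / maxAbs A

/-- `P` is a permutation matrix. -/
def IsPermMatrix {n : ℕ} (P : Matrix (Fin n) (Fin n) ℝ) : Prop :=
  ∃ σ : Equiv.Perm (Fin n), P = σ.permMatrix ℝ

/-- `D` is a diagonal matrix with diagonal entries `±1`. -/
def IsSignDiag {n : ℕ} (D : Matrix (Fin n) (Fin n) ℝ) : Prop :=
  (∀ i j, i ≠ j → D i j = 0) ∧ (∀ i, D i i = 1 ∨ D i i = -1)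

/-- Wilkinson's unipotent lower triangular matrix `L_n`. -/
def Lmat (n : ℕ) : Matrix (Fin n) (Fin n) ℝ :=
  fun i j => if i = j then 1 else if j < i then -1 else 0

/-- Wilkinson's upper triangular factor `U_n`. -/
def Umat (n : ℕ) : Matrix (Fin n) (Fin n) ℝ :=
  fun i j => if (j : ℕ) = n - 1 then 2 ^ (i : ℕ) else if i = j then 1 else 0

/-- Wilkinson's worst-case GEPP growth matrix `A_n`. -/
def Amat (n : ℕ) : Matrix (Fin n) (Fin n) ℝ :=
  fun i j =>
    if (j : ℕ) = n - 1 ∧ (i : ℕ) < n - 1 then 1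
    else if i = j then 1
    else if j < i then -1
    else 0

/-- `α_j = 1 + (2/3)(4^{j-1} - 1)` (1-indexed `j`). -/
noncomputable def alpha (j : ℕ) : ℝ := 1 + 2 / 3 * (4 ^ (j - 1) - 1)

/-- The unnormalized orthogonal factor `Q̂` (columns of `Qhat n` are, 1-indexed,
the columns described in the paper; here 0-indexed). -/
noncomputable def Qhat (n : ℕ) : Matrix (Fin n) (Fin n) ℝ :=
  fun i j =>
    if (j : ℕ) = n - 1 then
      if (i : ℕ) = n - 1 then 1 else 2 ^ (n - 2 - (i : ℕ))
    else if (j : ℕ) = n - 2 then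
      if (i : ℕ) = n - 2 then 1 else if (i : ℕ) = n - 1 then -1 else 0
    else if (i : ℕ) < (j : ℕ) then
      -((n : ℝ) - (j : ℕ) - 2) * 2 ^ ((j : ℕ) - (i : ℕ) - 1)
    else if (i : ℕ) = (j : ℕ) then
      ((n : ℝ) - (j : ℕ) - 1) * (alpha ((j : ℕ) + 1) - 1) + 1
    else -alpha ((j : ℕ) + 1)

/-- The diagonal normalization matrix `D̂`. -/
noncomputable def Dhat (n : ℕ) : Matrix (Fin n) (Fin n) ℝ :=
  Matrix.diagonal fun j =>
    if (j : ℕ) = 0 then (n : ℝ)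
    else if (j : ℕ) = n - 2 then 2
    else if (j : ℕ) = n - 1 then 2 * alpha (n - 1)
    else ((n : ℝ) - (j : ℕ) - 1) ^ 2 * (alpha ((j : ℕ) + 1) - 1) ^ 2 *
        (2 * alpha ((j : ℕ) + 1) - 1) / (2 * alpha ((j : ℕ) + 1) - 2) +
      ((n : ℝ) - (j : ℕ) - 1) * (alpha ((j : ℕ) + 1) ^ 2 + alpha ((j : ℕ) + 1) - 1) +
      2 * alpha (j : ℕ)

/-- `Q_n = Q̂ D̂^{-1/2}`, the orthogonal QR factor of `L_n`. -/
noncomputable def Qmat (n : ℕ) : Matrix (Fin n) (Fin n) ℝ :=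
  Qhat n * Matrix.diagonal fun m => (Real.sqrt (Dhat n m m))⁻¹

/-- Frobenius norm. -/
noncomputable def frobNorm {n : ℕ} (M : Matrix (Fin n) (Fin n) ℝ) : ℝ :=
  Real.sqrt (∑ i, ∑ j, M i j ^ 2)

/-- The Givens rotation `G(θ, i, j)`. -/
noncomputable def givens (n : ℕ) (θ : ℝ) (i j : Fin n) : Matrix (Fin n) (Fin n) ℝ :=
  fun a b =>
    if a = i ∧ b = i then Real.cos θ
    else if a = j ∧ b = j then Real.cos θ
    else if a = i ∧ b = j then -Real.sin θ
    else if a = j ∧ b = i then Real.sin θ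
    else if a = b then 1 else 0

/-- The ordered product of Givens rotations `Q(θ) = ∏_{i=1}^{n-1} ∏_{j=i+1}^n G(θ_{ij}, i, j)`. -/
noncomputable def QofTheta (n : ℕ) (θ : Fin n → Fin n → ℝ) : Matrix (Fin n) (Fin n) ℝ :=
  ((List.finRange n).map fun i =>
    (((List.finRange n).filter fun j => decide (i < j)).map fun j =>
      givens n (θ i j) i j).prod).prod

def NS {n : ℕ} (A : Matrix (Fin n) (Fin n) ℝ) (k : ℕ) : Prop :=
  ∀ c : Fin n → ℝ, (∀ j : Fin n, k ≤ j.val → c j = 0) →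
    (∀ i : Fin n, i.val < k → (A *ᵥ c) i = 0) → c = 0

lemma sum_low {n : ℕ} (k : ℕ) (hk : k ≤ n) (f : Fin n → ℝ)
    (hf : ∀ b : Fin n, k ≤ b.val → f b = 0) :
    ∑ b, f b = ∑ a : Fin k, f (Fin.castLE hk a) := by
  symm
  refine Fintype.sum_of_injective (Fin.castLE hk) (Fin.castLE_injective hk) _ _ ?_ ?_
  · intro b hb
    apply hf
    by_contra h
    exact hb ⟨⟨b.val, by omega⟩, by ext; simp⟩
  · intro a; rfl

lemma ge_char {n : ℕ} (A : Matrix (Fin n) (Fin n) ℝ) (k : Fin n) (h : NS A k.val) (j : Fin n) :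
    ∃ c : Fin n → ℝ, (∀ b : Fin n, k.val ≤ b.val → c b = 0) ∧
      (∀ i, geEntry A k i j = A i j - (A *ᵥ c) i) ∧
      (∀ i : Fin n, i.val < k.val → geEntry A k i j = 0) := by
  set B := A.submatrix (Fin.castLE k.isLt.le) (Fin.castLE k.isLt.le) with hB
  have hext : ∀ v : Fin k.val → ℝ, ∃ c : Fin n → ℝ, (∀ b : Fin n, k.val ≤ b.val → c b = 0) ∧
      (∀ a, c (Fin.castLE k.isLt.le a) = v a) := by
    intro v
    refine ⟨fun b => if hb : b.val < k.val then v ⟨b.val, hb⟩ else 0, ?_, ?_⟩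
    · intro b hb
      simp [Nat.not_lt.mpr hb]
    · intro a
      simp
  have hmul : ∀ c : Fin n → ℝ, (∀ b : Fin n, k.val ≤ b.val → c b = 0) → ∀ i,
      (A *ᵥ c) i = ∑ a : Fin k.val, A i (Fin.castLE k.isLt.le a) * c (Fin.castLE k.isLt.le a) := by
    intro c hc i
    simp only [Matrix.mulVec, dotProduct]
    apply sum_low k.val k.isLt.le (fun b => A i b * c b)
    intro b hb
    simp [hc b hb]
  have hdet : IsUnit B.det := by
    rw [isUnit_iff_ne_zero]
    intro h0
    obtain ⟨v, hv, hv0⟩ := Matrix.exists_mulVec_eq_zero_iff.mpr h0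
    obtain ⟨c, hc, hcv⟩ := hext v
    have hc0 := h c hc (by
      intro i hi
      rw [hmul c hc]
      have := congrFun hv0 ⟨i.val, hi⟩
      simp only [Matrix.mulVec, dotProduct, hB, Matrix.submatrix_apply, Pi.zero_apply] at this
      simp only [hcv]
      exact this)
    apply hv
    ext a
    rw [← hcv, hc0]; rfl
  obtain ⟨c, hc, hcv⟩ := hext (B⁻¹ *ᵥ fun b => A (Fin.castLE k.isLt.le b) j)
  have hform : ∀ i, geEntry A k i j = A i j - (A *ᵥ c) i := by
    intro i
    rw [hmul c hc, geEntry]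
    congr 1
    refine Finset.sum_congr rfl fun a _ => ?_
    rw [hcv]
    simp only [Matrix.mulVec, dotProduct, Finset.mul_sum, mul_assoc, hB]
  refine ⟨c, hc, hform, ?_⟩
  intro i hi
  rw [hform, hmul c hc]
  simp only [hcv]
  have h1 : B *ᵥ (B⁻¹ *ᵥ fun b => A (Fin.castLE k.isLt.le b) j) =
      fun b => A (Fin.castLE k.isLt.le b) j := by
    rw [Matrix.mulVec_mulVec, Matrix.mul_nonsing_inv _ hdet, Matrix.one_mulVec]
  have h2 := congrFun h1 ⟨i.val, hi⟩
  rw [Matrix.mulVec, dotProduct] at h2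
  simp only [hB, Matrix.submatrix_apply] at h2
  rw [sub_eq_zero]
  exact h2.symm

lemma ge_uniq {n : ℕ} (A : Matrix (Fin n) (Fin n) ℝ) (k : Fin n) (h : NS A k.val) (j : Fin n)
    (c : Fin n → ℝ) (hc : ∀ b : Fin n, k.val ≤ b.val → c b = 0)
    (hr : ∀ i : Fin n, i.val < k.val → A i j - (A *ᵥ c) i = 0) (i : Fin n) :
    geEntry A k i j = A i j - (A *ᵥ c) i := by
  obtain ⟨d, hd, hf, hz⟩ := ge_char A k h j
  have : c - d = 0 := by
    apply h
    · intro b hb; simp [hc b hb, hd b hb]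
    · intro i hi
      have h1 := hr i hi
      have h2 := hz i hi
      rw [hf] at h2
      rw [Matrix.mulVec_sub, Pi.sub_apply]; linarith
  rw [hf, sub_eq_zero.mp this]

lemma mulVec_e {n : ℕ} (A : Matrix (Fin n) (Fin n) ℝ) (k i : Fin n) :
    (A *ᵥ (Pi.single k (1 : ℝ))) i = A i k := by
  simp

lemma pivot_ne {n : ℕ} (A : Matrix (Fin n) (Fin n) ℝ) (hA : Aᵀ * A = 1) (hPP : IsPP A)
    (k : Fin n) (h : NS A k.val) : geEntry A k k k ≠ 0 := by
  intro h0
  obtain ⟨d, hd, hf, hz⟩ := ge_char A k h k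
  have h1 : A *ᵥ (Pi.single k (1 : ℝ) - d) = 0 := by
    ext i
    rw [Matrix.mulVec_sub, Pi.sub_apply, mulVec_e, ← hf, Pi.zero_apply]
    rcases lt_or_ge i.val k.val with hi | hi
    · exact hz i hi
    · have := hPP k i hi
      rw [h0, abs_zero] at this
      exact abs_nonpos_iff.mp this
  have h2 : Aᵀ *ᵥ (A *ᵥ (Pi.single k (1 : ℝ) - d)) = 0 := by rw [h1, Matrix.mulVec_zero]
  rw [Matrix.mulVec_mulVec, hA, Matrix.one_mulVec] at h2
  have := congrFun h2 k
  simp [hd k le_rfl] at this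

lemma NS_succ {n : ℕ} (A : Matrix (Fin n) (Fin n) ℝ) (hA : Aᵀ * A = 1) (hPP : IsPP A)
    (k : Fin n) (h : NS A k.val) : NS A (k.val + 1) := by
  intro c hc hz
  have hp := pivot_ne A hA hPP k h
  obtain ⟨d, hd, hf, hdz⟩ := ge_char A k h k
  have key : c - c k • (Pi.single k (1 : ℝ) - d) = 0 := by
    apply h
    · intro b hb
      by_cases hbk : b = k
      · subst hbk; simp [hd b le_rfl]
      · have : k.val + 1 ≤ b.val := by
          have : b.val ≠ k.val := fun h => hbk (Fin.ext h)
          omega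
        simp [hc b this, hd b hb, hbk]
    · intro i hi
      rw [Matrix.mulVec_sub, Matrix.mulVec_smul, Matrix.mulVec_sub, Pi.sub_apply, Pi.smul_apply,
        Pi.sub_apply, mulVec_e, ← hf, hdz i hi, hz i (by omega)]
      simp
  have hce := sub_eq_zero.mp key
  have h1 := hz k (by omega)
  rw [hce, Matrix.mulVec_smul, Matrix.mulVec_sub, Pi.smul_apply,
        Pi.sub_apply, mulVec_e, ← hf, smul_eq_mul] at h1
  have h2 : c k = 0 := by
    rcases mul_eq_zero.mp h1 with h | h
    · exact h
    · exact absurd h hp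
  rw [hce, h2, zero_smul]

lemma NS_all {n : ℕ} (A : Matrix (Fin n) (Fin n) ℝ) (hA : Aᵀ * A = 1) (hPP : IsPP A)
    (k : ℕ) (hk : k ≤ n) : NS A k := by
  induction k with
  | zero => intro c hc _; ext j; exact hc j (Nat.zero_le _)
  | succ k ih => exact NS_succ A hA hPP ⟨k, hk⟩ (ih (by omega))

lemma ge_rec {n : ℕ} (A : Matrix (Fin n) (Fin n) ℝ) (hA : Aᵀ * A = 1) (hPP : IsPP A)
    (k k' : Fin n) (hk : k'.val = k.val + 1) (i j : Fin n) :
    geEntry A k' i j = geEntry A k i j - geEntry A k k j / geEntry A k k k * geEntry A k i k := by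
  have h := NS_all A hA hPP k.val k.isLt.le
  have h' := NS_all A hA hPP k'.val k'.isLt.le
  have hp := pivot_ne A hA hPP k h
  obtain ⟨d, hd, hf, hdz⟩ := ge_char A k h k
  obtain ⟨e, he, hfe, hez⟩ := ge_char A k h j
  set t := geEntry A k k j / geEntry A k k k with ht
  have hval : ∀ i, A i j - (A *ᵥ (e + t • (Pi.single k (1 : ℝ) - d))) i =
      geEntry A k i j - t * geEntry A k i k := by
    intro i
    rw [Matrix.mulVec_add, Matrix.mulVec_smul, Matrix.mulVec_sub, Pi.add_apply, Pi.smul_apply,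
      Pi.sub_apply, mulVec_e, hf i, hfe i, smul_eq_mul]
    ring
  rw [← hval]
  apply ge_uniq A k' h'
  · intro b hb
    have hbk : b ≠ k := by rintro rfl; omega
    simp [he b (by omega), hd b (by omega), hbk]
  · intro i hi
    rw [hval]
    rcases lt_or_ge i.val k.val with hi' | hi'
    · rw [hez i hi', hdz i hi']; simp
    · have : i = k := Fin.ext (by omega)
      subst this
      rw [ht]; field_simp; ring

lemma ge_zero {n : ℕ} (A : Matrix (Fin n) (Fin n) ℝ) (k : Fin n) (hk : k.val = 0) (i j : Fin n) :
    geEntry A k i j = A i j := by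
  have : IsEmpty (Fin k.val) := by rw [hk]; infer_instance
  simp [geEntry]

lemma le_maxAbs {n : ℕ} (A : Matrix (Fin n) (Fin n) ℝ) (i j : Fin n) : |A i j| ≤ maxAbs A :=
  (le_ciSup (f := fun j => |A i j|) (Set.finite_range _).bddAbove j).trans
    (le_ciSup (f := fun i => ⨆ j, |A i j|) (Set.finite_range _).bddAbove i)

lemma ge_bound {n : ℕ} (A : Matrix (Fin n) (Fin n) ℝ) (hA : Aᵀ * A = 1) (hPP : IsPP A)
    (m : ℕ) : ∀ k : Fin n, k.val = m → ∀ i j : Fin n, k ≤ i →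
    |geEntry A k i j| ≤ |A i j| + (2 ^ m - 1) * maxAbs A := by
  induction m with
  | zero => intro k hk i j _; rw [ge_zero A k hk]; simp
  | succ m ih =>
    intro k' hk' i j hi
    let k : Fin n := ⟨m, by omega⟩
    have hki : k ≤ i := by
      rw [Fin.le_def] at hi ⊢; simp only [k]; omega
    rw [ge_rec A hA hPP k k' hk']
    have hp := pivot_ne A hA hPP k (NS_all A hA hPP k.val k.isLt.le)
    have h1 := ih k rfl i j hki
    have h2 := ih k rfl k j le_rfl
    have h3 := le_maxAbs A k j
    have h4 := hPP k i hki
    have h5 : |geEntry A k k j / geEntry A k k k * geEntry A k i k| ≤ |geEntry A k k j| := by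
      rw [abs_mul, abs_div, div_mul_eq_mul_div, div_le_iff₀ (abs_pos.mpr hp)]
      exact mul_le_mul_of_nonneg_left h4 (abs_nonneg _)
    have h6 := abs_sub (geEntry A k i j) (geEntry A k k j / geEntry A k k k * geEntry A k i k)
    rw [pow_succ]
    nlinarith

lemma ge_last {n : ℕ} (A : Matrix (Fin n) (Fin n) ℝ) (hA : Aᵀ * A = 1) (hPP : IsPP A)
    (k : Fin n) (hk : k.val + 1 = n) : A k k * geEntry A k k k = 1 := by
  obtain ⟨d, hd, hf, hdz⟩ := ge_char A k (NS_all A hA hPP k.val k.isLt.le) k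
  have h2 : Aᵀ *ᵥ (A *ᵥ (Pi.single k (1 : ℝ) - d)) = Pi.single k (1 : ℝ) - d := by
    rw [Matrix.mulVec_mulVec, hA, Matrix.one_mulVec]
  have h1 : A *ᵥ (Pi.single k (1 : ℝ) - d) = Pi.single k (geEntry A k k k) := by
    ext i
    rw [Matrix.mulVec_sub, Pi.sub_apply, mulVec_e, ← hf]
    by_cases hik : i = k
    · subst hik; simp
    · have : i.val ≠ k.val := fun h => hik (Fin.ext h)
      rw [hdz i (by omega)]; simp [hik]
  rw [h1] at h2
  have := congrFun h2 k
  simpa [hd k le_rfl] using this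

lemma col_norm {n : ℕ} (A : Matrix (Fin n) (Fin n) ℝ) (hA : Aᵀ * A = 1) (j : Fin n) :
    1 ≤ n * maxAbs A ^ 2 := by
  have h := congrFun (congrFun hA j) j
  rw [Matrix.mul_apply, Matrix.one_apply_eq] at h
  rw [← h]
  calc _ ≤ ∑ _i : Fin n, maxAbs A ^ 2 := by
        refine Finset.sum_le_sum fun i _ => ?_
        rw [Matrix.transpose_apply, ← sq, ← sq_abs]
        exact pow_le_pow_left₀ (abs_nonneg _) (le_maxAbs A i j) 2
    _ = _ := by simp

lemma maxAbs_pos {n : ℕ} (A : Matrix (Fin n) (Fin n) ℝ) (hA : Aᵀ * A = 1) (j : Fin n) :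
    0 < maxAbs A := by
  have h := col_norm A hA j
  have h0 : 0 ≤ maxAbs A := (abs_nonneg _).trans (le_maxAbs A j j)
  rcases h0.lt_or_eq with h1 | h1
  · exact h1
  · rw [← h1] at h; norm_num at h

lemma le_maxGE {n : ℕ} (A : Matrix (Fin n) (Fin n) ℝ) (k i j : Fin n) (hi : k ≤ i) (hj : k ≤ j) :
    |geEntry A k i j| ≤ maxGE A :=
  ((le_ciSup (f := fun j : {j : Fin n // k ≤ j} => |geEntry A k i j.1|)
    (Set.finite_range _).bddAbove ⟨j, hj⟩).trans
    (le_ciSup (f := fun i : {i : Fin n // k ≤ i} => ⨆ j : {j : Fin n // k ≤ j},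
      |geEntry A k i.1 j.1|) (Set.finite_range _).bddAbove ⟨i, hi⟩)).trans
    (le_ciSup (f := fun k : Fin n => ⨆ i : {i : Fin n // k ≤ i}, ⨆ j : {j : Fin n // k ≤ j},
      |geEntry A k i.1 j.1|) (Set.finite_range _).bddAbove k)

lemma exists_maxGE {n : ℕ} (hn : 0 < n) (A : Matrix (Fin n) (Fin n) ℝ) :
    ∃ k i j : Fin n, k ≤ i ∧ k ≤ j ∧ maxGE A = |geEntry A k i j| := by
  haveI : Nonempty (Fin n) := ⟨⟨0, hn⟩⟩
  obtain ⟨k, hk⟩ := exists_eq_ciSup_of_finite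
    (f := fun k : Fin n => ⨆ i : {i : Fin n // k ≤ i}, ⨆ j : {j : Fin n // k ≤ j},
      |geEntry A k i.1 j.1|)
  haveI : Nonempty {i : Fin n // k ≤ i} := ⟨⟨k, le_rfl⟩⟩
  obtain ⟨i, hi⟩ := exists_eq_ciSup_of_finite
    (f := fun i : {i : Fin n // k ≤ i} => ⨆ j : {j : Fin n // k ≤ j}, |geEntry A k i.1 j.1|)
  obtain ⟨j, hj⟩ := exists_eq_ciSup_of_finite
    (f := fun j : {j : Fin n // k ≤ j} => |geEntry A k i.1 j.1|)
  exact ⟨k, i.1, j.1, i.2, j.2, (hj.trans (hi.trans hk)).symm⟩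

lemma growth_le {n : ℕ} (hn : 0 < n) (A : Matrix (Fin n) (Fin n) ℝ) (hA : Aᵀ * A = 1)
    (hPP : IsPP A) : growth A ≤ 2 ^ (n - 1) := by
  have hM := maxAbs_pos A hA ⟨0, hn⟩
  rw [growth, div_le_iff₀ hM]
  obtain ⟨k, i, j, hi, hj, h⟩ := exists_maxGE hn A
  rw [h]
  have h1 := ge_bound A hA hPP _ k rfl i j hi
  have h2 := le_maxAbs A i j
  have h3 : (2 : ℝ) ^ k.val ≤ 2 ^ (n - 1) := pow_le_pow_right₀ (by norm_num) (by omega)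
  nlinarith

lemma growth_lt {n : ℕ} (hn : 3 ≤ n) (A : Matrix (Fin n) (Fin n) ℝ) (hA : Aᵀ * A = 1)
    (hPP : IsPP A) : growth A < 2 ^ (n - 1) := by
  have hM := maxAbs_pos A hA ⟨0, by omega⟩
  rw [growth, div_lt_iff₀ hM]
  obtain ⟨k, i, j, hi, hj, h⟩ := exists_maxGE (by omega) A
  rw [h]
  have h1 := ge_bound A hA hPP _ k rfl i j hi
  have h2 := le_maxAbs A i j
  rcases lt_or_ge k.val (n - 1) with hk | hk
  · have h3 : (2 : ℝ) ^ k.val < 2 ^ (n - 1) := pow_lt_pow_right₀ (by norm_num) hk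
    nlinarith
  · have hkn : k.val = n - 1 := by omega
    have hik : i = k := Fin.ext (by rw [Fin.le_def] at hi; omega)
    have hjk : j = k := Fin.ext (by rw [Fin.le_def] at hj; omega)
    subst hik
    subst hjk
    have hl := ge_last A hA hPP j (by omega)
    have hl' : |A j j| * |geEntry A j j j| = 1 := by rw [← abs_mul, hl, abs_one]
    have hc := col_norm A hA j
    rw [hkn] at h1
    by_contra hcon
    rw [not_lt] at hcon
    have hpow : (n : ℝ) < 2 ^ (n - 1) := by
      have : ∀ m, 3 ≤ m → m < 2 ^ (m - 1) := by
        intro m hm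
        induction m, hm using Nat.le_induction with
        | base => norm_num
        | succ m hm ih =>
          have : m + 1 - 1 = (m - 1) + 1 := by omega
          rw [this, pow_succ]; omega
      exact_mod_cast this n hn
    have e1 : |A j j| = maxAbs A := by linarith
    rw [e1] at hl'
    have hM2 : 0 < maxAbs A ^ 2 := by positivity
    nlinarith

lemma perm_orth {n : ℕ} (P Q : Matrix (Fin n) (Fin n) ℝ) (hP : IsPermMatrix P)
    (hQ : Qᵀ * Q = 1) : (P * Q)ᵀ * (P * Q) = 1 := by
  obtain ⟨σ, rfl⟩ := hP
  have : (σ.permMatrix ℝ)ᵀ * σ.permMatrix ℝ = 1 := by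
    rw [Matrix.transpose_permMatrix, ← Matrix.permMatrix_mul]
    simp
  rw [Matrix.transpose_mul, Matrix.mul_assoc, ← Matrix.mul_assoc _ _ Q, this, Matrix.one_mul, hQ]

lemma sup_of_mem {n : ℕ} (hn : 0 < n) (A : Matrix (Fin n) (Fin n) ℝ) (hA : Aᵀ * A = 1)
    (hPP : IsPP A) (hge : 2 ^ (n - 1) * maxAbs A ≤ maxGE A) :
    sSup {x : ℝ | ∃ Q : Matrix (Fin n) (Fin n) ℝ, Qᵀ * Q = 1 ∧
        ∃ P : Matrix (Fin n) (Fin n) ℝ, IsPermMatrix P ∧ IsPP (P * Q) ∧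
          x = growth (P * Q)} = 2 ^ (n - 1) := by
  apply IsGreatest.csSup_eq
  constructor
  · refine ⟨A, hA, 1, ⟨1, by simp⟩, by rwa [Matrix.one_mul], ?_⟩
    rw [Matrix.one_mul]
    refine le_antisymm ?_ (growth_le hn A hA hPP)
    rw [growth, le_div_iff₀ (maxAbs_pos A hA ⟨0, hn⟩)]
    exact hge
  · rintro x ⟨Q, hQ, P, hP, hPP, rfl⟩
    exact growth_le hn _ (perm_orth P Q hP hQ) hPP

lemma maxAbs_le {n : ℕ} (hn : 0 < n) (A : Matrix (Fin n) (Fin n) ℝ) (M : ℝ)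
    (h : ∀ i j, |A i j| ≤ M) : maxAbs A ≤ M := by
  haveI : Nonempty (Fin n) := ⟨⟨0, hn⟩⟩
  exact ciSup_le fun i => ciSup_le fun j => h i j

lemma case_one : ∃ A : Matrix (Fin 1) (Fin 1) ℝ, Aᵀ * A = 1 ∧ IsPP A ∧
    2 ^ (1 - 1) * maxAbs A ≤ maxGE A := by
  refine ⟨1, by simp, ?_, ?_⟩
  · intro k i _
    rw [Subsingleton.elim i k]
  · have h1 := le_maxGE (1 : Matrix (Fin 1) (Fin 1) ℝ) 0 0 0 le_rfl le_rfl
    rw [ge_zero _ _ rfl] at h1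
    have h2 := maxAbs_le (by norm_num) (1 : Matrix (Fin 1) (Fin 1) ℝ) 1 (by
      intro i j; rw [Subsingleton.elim i j]; simp)
    simp at h1 ⊢
    linarith

lemma case_two : ∃ A : Matrix (Fin 2) (Fin 2) ℝ, Aᵀ * A = 1 ∧ IsPP A ∧
    2 ^ (2 - 1) * maxAbs A ≤ maxGE A := by
  obtain ⟨s, hs, hs2⟩ : ∃ s : ℝ, 0 < s ∧ s * s = 1 / 2 :=
    ⟨Real.sqrt (1 / 2), by positivity, Real.mul_self_sqrt (by norm_num)⟩
  have hA : (!![s, s; s, -s])ᵀ * !![s, s; s, -s] = 1 := by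
    ext i j
    fin_cases i <;> fin_cases j <;> simp [Matrix.mul_apply, Fin.sum_univ_two] <;> linarith
  have hPP : IsPP !![s, s; s, -s] := by
    intro k i hki
    fin_cases k
    · rw [ge_zero _ _ rfl, ge_zero _ _ rfl]
      fin_cases i <;> simp
    · fin_cases i
      · simp at hki
      · exact le_rfl
  refine ⟨!![s, s; s, -s], hA, hPP, ?_⟩
  have h1 := le_maxGE !![s, s; s, -s] 1 1 1 le_rfl le_rfl
  rw [ge_rec _ hA hPP 0 1 rfl] at h1
  simp only [ge_zero _ (0 : Fin 2) rfl] at h1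
  have h2 := maxAbs_le (by norm_num) !![s, s; s, -s] s (by
    intro i j
    fin_cases i <;> fin_cases j <;> simp [abs_of_pos hs])
  simp [hs.ne'] at h1
  have h3 := neg_le_abs (-s - s)
  norm_num
  linarith

/-- for `n ∈ {1, 2}` the supremum of `ρ^GEPP` over `O(n)` equals `2^{n-1}`;
for every `n ≥ 3` and every `Q ∈ O(n)`, `ρ^GEPP(Q) < 2^{n-1}`. -/
theorem orth_gepp_growth_sup :
    (∀ n : ℕ, n = 1 ∨ n = 2 →
      sSup {x : ℝ | ∃ Q : Matrix (Fin n) (Fin n) ℝ, Qᵀ * Q = 1 ∧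
        ∃ P : Matrix (Fin n) (Fin n) ℝ, IsPermMatrix P ∧ IsPP (P * Q) ∧
          x = growth (P * Q)} = 2 ^ (n - 1)) ∧
    (∀ n : ℕ, 3 ≤ n → ∀ Q : Matrix (Fin n) (Fin n) ℝ, Qᵀ * Q = 1 →
      ∀ P : Matrix (Fin n) (Fin n) ℝ, IsPermMatrix P → IsPP (P * Q) →
        growth (P * Q) < 2 ^ (n - 1)) := by
  refine ⟨?_, ?_⟩
  · rintro n (rfl | rfl)
    · obtain ⟨A, h1, h2, h3⟩ := case_one
      exact sup_of_mem (by norm_num) A h1 h2 h3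
    · obtain ⟨A, h1, h2, h3⟩ := case_two
      exact sup_of_mem (by norm_num) A h1 h2 h3
  · intro n hn Q hQ P hP hPP
    exact growth_lt hn _ (perm_orth P Q hP hQ) hPP
end

section
/- For every n ≥ 3, the orthogonal matrix Q_n = Q̂ D̂^{−1/2} satisfies ‖Q_n e_n‖_∞ = 2^{n−2}/√(2α_{n−1}), and consequently √(2α_{n−1}) / ‖Q_n‖_max ≤ 2^{n−1}·(2 + 4^{2−n})/3 < 2^{n−1}, where ‖Q_n‖_max = max_{i,j} |(Q_n)_{ij}| and ‖Q_n e_n‖_∞ is the maximum absolute value of an entry of the last column of Q_n. -/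
open Matrix Filter

lemma Qmat_last (n : ℕ) (hn : 3 ≤ n) (i j : Fin n) (hj : (j : ℕ) = n - 1) :
    Qmat n i j =
      (if (i : ℕ) = n - 1 then 1 else 2 ^ (n - 2 - (i : ℕ))) / Real.sqrt (2 * alpha (n - 1)) := by
  have h1 : n - 1 ≠ 0 := by omega
  have h2 : n - 1 ≠ n - 2 := by omega
  simp only [Qmat, Matrix.mul_diagonal, Dhat, Matrix.diagonal_apply_eq, Qhat, hj, if_true, h1, h2,
    if_false, div_eq_mul_inv]

lemma alpha_last_pos (k : ℕ) : 0 < alpha k := by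
  have : (1 : ℝ) ≤ 4 ^ (k - 1) := one_le_pow₀ (by norm_num)
  unfold alpha
  linarith

/-- for `n ≥ 3`, `‖Q_n e_n‖_∞ = 2^{n-2}/√(2α_{n-1})`, and consequently
`√(2α_{n-1})/‖Q_n‖_max ≤ 2^{n-1}·(2 + 4^{2-n})/3 < 2^{n-1}`. -/
theorem Qn_last_column_bound (n : ℕ) (hn : 3 ≤ n) :
    (⨆ i : Fin n, |Qmat n i ⟨n - 1, by omega⟩|) =
      2 ^ (n - 2) / Real.sqrt (2 * alpha (n - 1)) ∧
    Real.sqrt (2 * alpha (n - 1)) / maxAbs (Qmat n) ≤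
      2 ^ (n - 1) * ((2 + (4 : ℝ) ^ ((2 : ℤ) - (n : ℤ))) / 3) ∧
    2 ^ (n - 1) * ((2 + (4 : ℝ) ^ ((2 : ℤ) - (n : ℤ))) / 3) < 2 ^ (n - 1) := by
  have hα := alpha_last_pos (n - 1)
  have hs : 0 < Real.sqrt (2 * alpha (n - 1)) := Real.sqrt_pos.2 (by linarith)
  have habs : ∀ i : Fin n, |Qmat n i ⟨n - 1, by omega⟩| ≤
      2 ^ (n - 2) / Real.sqrt (2 * alpha (n - 1)) := by
    intro i
    rw [Qmat_last n hn i _ rfl, abs_div, abs_of_pos hs]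
    gcongr
    split_ifs
    · rw [abs_one]
      exact one_le_pow₀ (by norm_num)
    · rw [abs_of_pos (by positivity)]
      exact pow_le_pow_right₀ (by norm_num) (by omega)
  have h0 : |Qmat n ⟨0, by omega⟩ ⟨n - 1, by omega⟩| =
      2 ^ (n - 2) / Real.sqrt (2 * alpha (n - 1)) := by
    have h1 : ¬ (0 = n - 1) := by omega
    rw [Qmat_last n hn _ _ rfl, abs_of_nonneg]
    · simp [h1]
    · simp only [h1, if_false]
      positivity
  have hmax : 2 ^ (n - 2) / Real.sqrt (2 * alpha (n - 1)) ≤ maxAbs (Qmat n) := by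
    rw [← h0]
    unfold maxAbs
    exact (le_ciSup (f := fun j => |Qmat n ⟨0, by omega⟩ j|)
      (Set.finite_range _).bddAbove ⟨n - 1, by omega⟩).trans
      (le_ciSup (f := fun i => ⨆ j, |Qmat n i j|) (Set.finite_range _).bddAbove ⟨0, by omega⟩)
  refine ⟨?_, ?_, ?_⟩
  · have : Nonempty (Fin n) := ⟨⟨0, by omega⟩⟩
    apply le_antisymm
    · exact ciSup_le habs
    · rw [← h0]
      exact le_ciSup (f := fun i : Fin n => |Qmat n i ⟨n - 1, by omega⟩|)
        (Set.finite_range _).bddAbove ⟨0, by omega⟩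
  · have hp : (0 : ℝ) < 2 ^ (n - 2) / Real.sqrt (2 * alpha (n - 1)) := by positivity
    refine (div_le_div_of_nonneg_left hs.le hp hmax).trans (le_of_eq ?_)
    rw [div_div_eq_mul_div, Real.mul_self_sqrt (by linarith)]
    obtain ⟨m, rfl⟩ : ∃ m, n = m + 2 := ⟨n - 2, by omega⟩
    have e1 : m + 2 - 1 = m + 1 := by omega
    have e2 : (2 : ℤ) - ((m + 2 : ℕ) : ℤ) = -(m : ℤ) := by push_cast; ring
    rw [e2, e1, _root_.zpow_neg, _root_.zpow_natCast]
    simp only [alpha, Nat.add_sub_cancel]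
    have h4 : (4 : ℝ) ^ m = 2 ^ m * 2 ^ m := by rw [← mul_pow]; norm_num
    rw [h4, pow_succ]
    have : (2 : ℝ) ^ m ≠ 0 := by positivity
    field_simp
    ring
  · have h4 : (4 : ℝ) ^ ((2 : ℤ) - (n : ℤ)) < 1 :=
      zpow_lt_one_of_neg₀ (by norm_num) (by omega)
    have hp : (0 : ℝ) < 2 ^ (n - 1) := by positivity
    exact mul_lt_of_lt_one_right hp (by linarith)
end

section
/- The map θ ↦ Q(θ), sending θ = (θ_{ij})_{1≤i<j≤n} ∈ ℝ^{n(n−1)/2} to the ordered product of Givens rotations Q(θ) = ∏_{i=1}^{n−1} ∏_{j=i+1}^{n} G(θ_{ij}, i, j), is √(n(n−1))-Lipschitz from (ℝ^{n(n−1)/2}, Euclidean norm) to (ℝ^{n×n}, Frobenius norm): for all θ, θ′, ‖Q(θ) − Q(θ′)‖_F ≤ √(n(n−1)) · ‖θ − θ′‖₂. Consequently, for any A ∈ ℝ^{n×n} with A ≠ 0 and any ε > 0, if ‖θ‖₂ ≤ ε / (√(n(n−1)) ‖A‖_F), then ‖A − Q(θ)A‖_F ≤ ε. -/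
open Matrix Filter

theorem aux_frobNorm_eq {n : ℕ} (M : Matrix (Fin n) (Fin n) ℝ) :
    frobNorm M = Real.sqrt (Matrix.trace (Mᵀ * M)) := by
  unfold frobNorm
  congr 1
  simp only [Matrix.trace, Matrix.diag, Matrix.mul_apply, Matrix.transpose_apply]
  rw [Finset.sum_comm]
  simp only [sq]

section
attribute [local instance] Matrix.frobeniusNormedAddCommGroup

theorem aux_frobNorm_norm {n : ℕ} (M : Matrix (Fin n) (Fin n) ℝ) : frobNorm M = ‖M‖ := by
  rw [Matrix.frobenius_norm_def, frobNorm, Real.sqrt_eq_rpow]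
  simp

theorem aux_frobNorm_add {n : ℕ} (M N : Matrix (Fin n) (Fin n) ℝ) :
    frobNorm (M + N) ≤ frobNorm M + frobNorm N := by
  simp only [aux_frobNorm_norm]
  exact norm_add_le _ _

theorem aux_frobNorm_mul {n : ℕ} (M N : Matrix (Fin n) (Fin n) ℝ) :
    frobNorm (M * N) ≤ frobNorm M * frobNorm N := by
  simp only [aux_frobNorm_norm]
  exact Matrix.frobenius_norm_mul _ _

end

theorem aux_orth_left {n : ℕ} (U M : Matrix (Fin n) (Fin n) ℝ) (hU : Uᵀ * U = 1) :
    frobNorm (U * M) = frobNorm M := by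
  rw [aux_frobNorm_eq, aux_frobNorm_eq, Matrix.transpose_mul, Matrix.mul_assoc,
    ← Matrix.mul_assoc Uᵀ, hU, Matrix.one_mul]

theorem aux_orth_right {n : ℕ} (U M : Matrix (Fin n) (Fin n) ℝ) (hU : Uᵀ * U = 1) :
    frobNorm (M * U) = frobNorm M := by
  have h2 : U * Uᵀ = 1 := mul_eq_one_comm.mp hU
  rw [aux_frobNorm_eq, aux_frobNorm_eq, Matrix.transpose_mul, Matrix.mul_assoc,
    Matrix.trace_mul_comm, Matrix.mul_assoc, Matrix.mul_assoc, h2, Matrix.mul_one]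

theorem aux_list_orth {n : ℕ} {α : Type} (l : List α) (f : α → Matrix (Fin n) (Fin n) ℝ)
    (hf : ∀ a ∈ l, (f a)ᵀ * f a = 1) : ((l.map f).prod)ᵀ * (l.map f).prod = 1 := by
  induction l with
  | nil => simp
  | cons a l ih =>
    have h1 := hf a (by simp)
    have h2 := ih (fun b hb => hf b (by simp [hb]))
    rw [List.map_cons, List.prod_cons, Matrix.transpose_mul, Matrix.mul_assoc,
      ← Matrix.mul_assoc (f a)ᵀ, h1, Matrix.one_mul, h2]

theorem aux_list_lip {n : ℕ} {α : Type} (l : List α) (f g : α → Matrix (Fin n) (Fin n) ℝ)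
    (c : α → ℝ)
    (hf : ∀ a ∈ l, (f a)ᵀ * f a = 1) (hg : ∀ a ∈ l, (g a)ᵀ * g a = 1)
    (hc : ∀ a ∈ l, frobNorm (f a - g a) ≤ c a) :
    frobNorm ((l.map f).prod - (l.map g).prod) ≤ (l.map c).sum := by
  induction l with
  | nil => simp [frobNorm]
  | cons a l ih =>
    have h2 := ih (fun b hb => hf b (by simp [hb])) (fun b hb => hg b (by simp [hb]))
      (fun b hb => hc b (by simp [hb]))
    have ho := aux_list_orth l g (fun b hb => hg b (by simp [hb]))
    simp only [List.map_cons, List.prod_cons, List.sum_cons]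
    have e : f a * (l.map f).prod - g a * (l.map g).prod =
      (f a - g a) * (l.map g).prod + f a * ((l.map f).prod - (l.map g).prod) := by
      noncomm_ring
    rw [e]
    refine (aux_frobNorm_add _ _).trans ?_
    rw [aux_orth_right _ _ ho, aux_orth_left _ _ (hf a (by simp))]
    exact add_le_add (hc a (by simp)) h2

/-- The projection on the rotation plane. -/
def auxP {n : ℕ} (i j : Fin n) : Matrix (Fin n) (Fin n) ℝ :=
  Matrix.single i i 1 + Matrix.single j j 1

/-- The rotation generator. -/
def auxJ {n : ℕ} (i j : Fin n) : Matrix (Fin n) (Fin n) ℝ :=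
  Matrix.single j i 1 - Matrix.single i j 1

theorem aux_givens {n : ℕ} (θ : ℝ) (i j : Fin n) (h : i ≠ j) :
    givens n θ i j = 1 + ((Real.cos θ - 1) • auxP i j + Real.sin θ • auxJ i j) := by
  ext a b
  simp only [givens, auxP, auxJ, Matrix.add_apply, Matrix.smul_apply, Matrix.sub_apply,
    Matrix.single_apply, Matrix.one_apply, smul_eq_mul]
  grind

theorem aux_mul {n : ℕ} (x y : ℝ) (i j : Fin n) (h : i ≠ j) :
    (x • auxP i j + y • auxJ i j)ᵀ * (x • auxP i j + y • auxJ i j) =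
      (x ^ 2 + y ^ 2) • auxP i j := by
  have hP : (auxP i j)ᵀ = auxP i j := by simp [auxP]
  have hJ : (auxJ i j)ᵀ = -auxJ i j := by simp [auxJ]
  have h1 : auxP i j * auxP i j = auxP i j := by
    simp [auxP, Matrix.add_mul, Matrix.mul_add, h, h.symm]
  have h2 : auxP i j * auxJ i j = auxJ i j := by
    simp [auxP, auxJ, Matrix.add_mul, Matrix.mul_sub, h, h.symm]
    try abel
  have h3 : auxJ i j * auxP i j = auxJ i j := by
    simp [auxP, auxJ, Matrix.sub_mul, Matrix.mul_add, h, h.symm]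
    try abel
  have h4 : auxJ i j * auxJ i j = - auxP i j := by
    simp [auxP, auxJ, Matrix.sub_mul, Matrix.mul_sub, h, h.symm]
    try abel
  simp only [Matrix.transpose_add, Matrix.transpose_smul, hP, hJ, Matrix.add_mul, Matrix.mul_add,
    Matrix.smul_mul, Matrix.mul_smul, Matrix.neg_mul, h1, h2, h3, h4]
  module

theorem aux_givens_orth {n : ℕ} (θ : ℝ) (i j : Fin n) (h : i ≠ j) :
    (givens n θ i j)ᵀ * givens n θ i j = 1 := by
  have hP : (auxP i j)ᵀ = auxP i j := by simp [auxP]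
  have hJ : (auxJ i j)ᵀ = -auxJ i j := by simp [auxJ]
  rw [aux_givens θ i j h, Matrix.transpose_add, Matrix.add_mul,
    Matrix.transpose_one, Matrix.one_mul, Matrix.mul_add, Matrix.mul_one, aux_mul]
  · simp only [Matrix.transpose_add, Matrix.transpose_smul, hP, hJ, Matrix.transpose_one,
      Matrix.one_mul, Matrix.mul_one]
    have := Real.sin_sq θ
    rw [this]
    module
  · exact h

theorem aux_givens_lip {n : ℕ} (θ θ' : ℝ) (i j : Fin n) (h : i ≠ j) :
    frobNorm (givens n θ i j - givens n θ' i j) ≤ Real.sqrt 2 * |θ - θ'| := by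
  have e : givens n θ i j - givens n θ' i j =
      (Real.cos θ - Real.cos θ') • auxP i j + (Real.sin θ - Real.sin θ') • auxJ i j := by
    rw [aux_givens θ i j h, aux_givens θ' i j h]
    module
  rw [aux_frobNorm_eq, e, aux_mul _ _ _ _ h, ← Real.sqrt_sq_eq_abs,
    ← Real.sqrt_mul (by norm_num)]
  apply Real.sqrt_le_sqrt
  have ht : Matrix.trace (auxP i j) = 2 := by
    simp [auxP]; norm_num
  rw [Matrix.trace_smul, ht, smul_eq_mul]
  have h1 := Real.one_sub_sq_div_two_le_cos (x := θ - θ')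
  rw [Real.cos_sub] at h1
  nlinarith [Real.sin_sq_add_cos_sq θ, Real.sin_sq_add_cos_sq θ']

theorem aux_filter_sum {α : Type} (l : List α) (p : α → Prop) [DecidablePred p] (f : α → ℝ) :
    ((l.filter fun a => decide (p a)).map f).sum = (l.map fun a => if p a then f a else 0).sum := by
  induction l with
  | nil => simp
  | cons a l ih =>
    by_cases h : p a <;> simp [h, ih]

theorem aux_lip_sum (n : ℕ) (θ θ' : Fin n → Fin n → ℝ) :
    frobNorm (QofTheta n θ - QofTheta n θ') ≤
      ∑ i, ∑ j, if i < j then Real.sqrt 2 * |θ i j - θ' i j| else 0 := by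
  have hn : ∀ i j : Fin n, j ∈ ((List.finRange n).filter fun j => decide (i < j)) → i ≠ j := by
    intro i j hj
    simp at hj
    exact hj.ne
  have ho : ∀ (τ : Fin n → Fin n → ℝ) (i : Fin n), _ := fun τ i =>
    aux_list_orth ((List.finRange n).filter fun j => decide (i < j))
      (fun j => givens n (τ i j) i j) (fun j hj => aux_givens_orth _ _ _ (hn i j hj))
  unfold QofTheta
  rw [Fin.sum_univ_def]
  apply aux_list_lip
  · intro i _; exact ho θ i
  · intro i _; exact ho θ' i
  · intro i _
    rw [Fin.sum_univ_def, ← aux_filter_sum (List.finRange n) (fun j => i < j)]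
    apply aux_list_lip
    · intro j hj; exact aux_givens_orth _ _ _ (hn i j hj)
    · intro j hj; exact aux_givens_orth _ _ _ (hn i j hj)
    · intro j hj; exact aux_givens_lip _ _ _ _ (hn i j hj)

theorem aux_card (n : ℕ) : (∑ i : Fin n, ∑ j : Fin n, if i < j then (2 : ℝ) else 0) = n * (n - 1) := by
  have h1 : (∑ i : Fin n, ∑ j : Fin n, if i < j then (1 : ℝ) else 0) =
      ∑ i : Fin n, ∑ j : Fin n, if j < i then (1 : ℝ) else 0 := Finset.sum_comm
  have h2 : (∑ i : Fin n, ∑ j : Fin n, if i < j then (2 : ℝ) else 0) =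
      (∑ i : Fin n, ∑ j : Fin n, if i < j then (1 : ℝ) else 0) +
      ∑ i : Fin n, ∑ j : Fin n, if i < j then (1 : ℝ) else 0 := by
    simp only [← Finset.sum_add_distrib]
    refine Finset.sum_congr rfl fun i _ => Finset.sum_congr rfl fun j _ => ?_
    split_ifs <;> norm_num
  rw [h2]
  nth_rewrite 2 [h1]
  simp only [← Finset.sum_add_distrib]
  have h3 : ∀ i j : Fin n, ((if i < j then (1 : ℝ) else 0) + if j < i then 1 else 0) =
      1 - if i = j then 1 else 0 := by
    intro i j
    rcases lt_trichotomy i j with h | h | h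
    · simp [h, h.ne, h.le]
    · simp [h]
    · simp [h, h.ne', h.le]
  simp only [h3, Finset.sum_sub_distrib]
  simp
  ring

theorem aux_lip (n : ℕ) (θ θ' : Fin n → Fin n → ℝ) :
    frobNorm (QofTheta n θ - QofTheta n θ') ≤
        Real.sqrt ((n : ℝ) * ((n : ℝ) - 1)) *
          Real.sqrt (∑ i, ∑ j, if i < j then (θ i j - θ' i j) ^ 2 else 0) := by
  refine (aux_lip_sum n θ θ').trans ?_
  have h := Real.sum_mul_le_sqrt_mul_sqrt (Finset.univ : Finset (Fin n × Fin n))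
    (fun p => if p.1 < p.2 then Real.sqrt 2 else 0)
    (fun p => if p.1 < p.2 then |θ p.1 p.2 - θ' p.1 p.2| else 0)
  simp only [Fintype.sum_prod_type, ite_pow, mul_ite, ite_mul, zero_mul, mul_zero, sq_abs] at h
  rw [← aux_card]
  have e1 : ∀ i j : Fin n, (if i < j then if i < j then √2 * |θ i j - θ' i j| else 0 else 0) =
      if i < j then √2 * |θ i j - θ' i j| else 0 := by
    intro i j
    split_ifs <;> rfl
  have e2 : (√2 : ℝ) ^ 2 = 2 := Real.sq_sqrt (by norm_num)
  have e3 : (0 : ℝ) ^ 2 = 0 := by norm_num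
  simp only [e1, e2, e3] at h
  exact h

/-- the map `θ ↦ Q(θ)` is `√(n(n-1))`-Lipschitz (Euclidean to Frobenius norm);
consequently `‖θ‖₂ ≤ ε/(√(n(n-1)) ‖A‖_F)` implies `‖A - Q(θ)A‖_F ≤ ε`. -/
theorem QofTheta_lipschitz (n : ℕ) :
    (∀ θ θ' : Fin n → Fin n → ℝ,
      frobNorm (QofTheta n θ - QofTheta n θ') ≤
        Real.sqrt ((n : ℝ) * ((n : ℝ) - 1)) *
          Real.sqrt (∑ i, ∑ j, if i < j then (θ i j - θ' i j) ^ 2 else 0)) ∧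
    (∀ A : Matrix (Fin n) (Fin n) ℝ, A ≠ 0 → ∀ ε : ℝ, 0 < ε →
      ∀ θ : Fin n → Fin n → ℝ,
        Real.sqrt (∑ i, ∑ j, if i < j then (θ i j) ^ 2 else 0) ≤
          ε / (Real.sqrt ((n : ℝ) * ((n : ℝ) - 1)) * frobNorm A) →
        frobNorm (A - QofTheta n θ * A) ≤ ε) := by
  refine ⟨aux_lip n, ?_⟩
  intro A _ ε hε θ h
  have h0 : QofTheta n (fun _ _ => 0) = 1 := by
    have hg : ∀ i j : Fin n, i ≠ j → givens n 0 i j = 1 := by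
      intro i j hij
      rw [aux_givens _ _ _ hij]
      simp
    unfold QofTheta
    apply List.prod_eq_one
    intro M hM
    obtain ⟨i, _, rfl⟩ := List.mem_map.mp hM
    apply List.prod_eq_one
    intro M hM
    obtain ⟨j, hj, rfl⟩ := List.mem_map.mp hM
    simp at hj
    exact hg i j hj.ne
  have h1 := aux_lip n (fun _ _ => 0) θ
  rw [h0] at h1
  simp only [zero_sub, neg_sq] at h1
  have e : A - QofTheta n θ * A = (1 - QofTheta n θ) * A := by noncomm_ring
  rw [e]
  refine (aux_frobNorm_mul _ _).trans ?_
  have hA : 0 ≤ frobNorm A := Real.sqrt_nonneg _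
  refine (mul_le_mul_of_nonneg_right h1 hA).trans ?_
  set S := Real.sqrt (∑ i, ∑ j, if i < j then (θ i j) ^ 2 else 0)
  set L := Real.sqrt ((n : ℝ) * ((n : ℝ) - 1))
  have hL : 0 ≤ L * frobNorm A := mul_nonneg (Real.sqrt_nonneg _) hA
  have e2 : L * S * frobNorm A = S * (L * frobNorm A) := by ring
  rw [e2]
  rcases hL.eq_or_lt with h3 | h3
  · rw [← h3, mul_zero]; exact hε.le
  · exact (le_div_iff₀ h3).mp h
end
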